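/- (Fefferman–Stein vector-valued maximal inequality, interval case) Let $1 < p < \infty$ and $1 \le q < \min\{2, p\}$. Then for any sequence $(g_k)_{k\ge 1}$ of measurable functions on $[0,1)$, $\Big\| \Big( \sum_{k=1}^\infty \mathcal{M}_q(g_k)^2 \Big)^{1/2} \Big\|_{L^p(0,1)} \le C_{p,q} \Big\| \Big( \sum_{k=1}^\infty |g_k|^2 \Big)^{1/2} \Big\|_{L^p(0,1)}$. -/

import Mathlib

open MeasureTheory Set

noncomputable section

/-- The `q`-maximal function over open subintervals of `[0,1)`. -/
def MMq (q : ℝ) (f : ℝ → ℝ) (x : ℝ) : ℝ :=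
  sSup {y | ∃ a b : ℝ, 0 ≤ a ∧ a < x ∧ x < b ∧ b ≤ 1 ∧
    y = ((b - a)⁻¹ * ∫ t in Set.Ioo a b, |f t| ^ q) ^ (1 / q)}

open scoped ENNReal NNReal

/-- The uncentered Hardy–Littlewood maximal function on the line. -/
def maximal (f : ℝ → ℝ≥0∞) (x : ℝ) : ℝ≥0∞ :=
  ⨆ (a : ℝ) (b : ℝ) (_ : x ∈ Ioo a b), ⨍⁻ t in Ioo a b, f t ∂volume

lemma laverage_le_maximal (f : ℝ → ℝ≥0∞) {a b x : ℝ} (hx : x ∈ Ioo a b) :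
    ⨍⁻ t in Ioo a b, f t ∂volume ≤ maximal f x :=
  le_iSup_of_le a (le_iSup_of_le b (le_iSup_of_le hx le_rfl))

lemma maximal_le {f : ℝ → ℝ≥0∞} {x : ℝ} {c : ℝ≥0∞}
    (h : ∀ a b, x ∈ Ioo a b → ⨍⁻ t in Ioo a b, f t ∂volume ≤ c) : maximal f x ≤ c :=
  iSup_le fun a => iSup_le fun b => iSup_le fun hx => h a b hx

lemma lt_maximal_iff {f : ℝ → ℝ≥0∞} {x : ℝ} {c : ℝ≥0∞} :
    c < maximal f x ↔ ∃ a b, x ∈ Ioo a b ∧ c < ⨍⁻ t in Ioo a b, f t ∂volume := by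
  simp only [maximal, lt_iSup_iff, exists_prop]

lemma setOf_lt_maximal (f : ℝ → ℝ≥0∞) (c : ℝ≥0∞) :
    {x | c < maximal f x} =
      ⋃ i ∈ {i : ℝ × ℝ | c < ⨍⁻ t in Ioo i.1 i.2, f t ∂volume}, Ioo i.1 i.2 := by
  ext x
  simp only [mem_ofPred_eq, lt_maximal_iff, mem_iUnion, exists_prop, Prod.exists]
  exact exists₂_congr fun a b => and_comm

lemma measurable_maximal (f : ℝ → ℝ≥0∞) : Measurable (maximal f) := by
  refine measurable_of_Ioi fun c => ?_
  change MeasurableSet {x | c < maximal f x}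
  rw [setOf_lt_maximal]
  exact (isOpen_biUnion fun i _ => isOpen_Ioo).measurableSet

lemma maximal_const_le (c : ℝ≥0∞) (x : ℝ) : maximal (fun _ => c) x ≤ c := by
  refine maximal_le fun a b _ => ?_
  rw [setLAverage_eq, setLIntegral_const]
  exact ENNReal.div_le_of_le_mul le_rfl

lemma laverage_mono {a b : ℝ} {f g : ℝ → ℝ≥0∞} (h : f ≤ᵐ[volume] g) :
    ⨍⁻ t in Ioo a b, f t ∂volume ≤ ⨍⁻ t in Ioo a b, g t ∂volume := by
  rw [setLAverage_eq, setLAverage_eq]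
  exact ENNReal.div_le_div_right (lintegral_mono_ae (ae_restrict_of_ae h)) _

lemma maximal_mono_ae {f g : ℝ → ℝ≥0∞} (h : f ≤ᵐ[volume] g) (x : ℝ) :
    maximal f x ≤ maximal g x :=
  maximal_le fun _ _ hx => (laverage_mono h).trans (laverage_le_maximal g hx)

lemma maximal_add_le {f g : ℝ → ℝ≥0∞} (hf : Measurable f) (x : ℝ) :
    maximal (fun t => f t + g t) x ≤ maximal f x + maximal g x := by
  refine maximal_le fun a b hx => ?_
  refine le_trans (le_of_eq ?_)
    (add_le_add (laverage_le_maximal f hx) (laverage_le_maximal g hx))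
  simp only [setLAverage_eq]
  rw [lintegral_add_left hf, ENNReal.add_div]

/-- Hölder's inequality for the maximal function. -/
lemma maximal_mul_le {a b : ℝ} (hab : a.HolderConjugate b) {f g : ℝ → ℝ≥0∞}
    (hf : Measurable f) (hg : Measurable g) (x : ℝ) :
    maximal (fun t => f t * g t) x ≤
      maximal (fun t => f t ^ a) x ^ (1 / a) * maximal (fun t => g t ^ b) x ^ (1 / b) := by
  refine maximal_le fun c d hx => ?_
  have ha := hab.pos
  have hb := hab.symm.pos
  refine (ENNReal.lintegral_mul_le_Lp_mul_Lq _ hab hf.aemeasurable hg.aemeasurable).trans ?_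
  gcongr
  · exact laverage_le_maximal (fun t => f t ^ a) hx
  · exact laverage_le_maximal (fun t => g t ^ b) hx

lemma mul_setLIntegral_le_of_lt_laverage (f u : ℝ → ℝ≥0∞) {c : ℝ≥0∞} {x ρ : ℝ} (hρ : 0 < ρ)
    (hc : c < ⨍⁻ t in Ioo (x - ρ) (x + ρ), f t ∂volume) :
    c * ∫⁻ t in Metric.closedBall x (4 * ρ), u t ≤
      5 * ∫⁻ t in Ioo (x - ρ) (x + ρ), f t * maximal u t := by
  set I := Ioo (x - ρ) (x + ρ)
  set J := Ioo (x - 5 * ρ) (x + 5 * ρ)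
  have hIJ : I ⊆ J := Ioo_subset_Ioo (by linarith) (by linarith)
  have hball : Metric.closedBall x (4 * ρ) ⊆ J := by
    rw [Real.closedBall_eq_Icc]
    exact Icc_subset_Ioo (by linarith) (by linarith)
  have hI : volume I = ENNReal.ofReal (2 * ρ) := by
    rw [Real.volume_Ioo]; congr 1; ring
  have hJ : volume J = 5 * ENNReal.ofReal (2 * ρ) := by
    rw [Real.volume_Ioo, ← ENNReal.ofReal_ofNat, ← ENNReal.ofReal_mul (by norm_num)]
    congr 1; ring
  have h0 : ENNReal.ofReal (2 * ρ) ≠ 0 := by simpa using hρ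
  have hJ0 : volume J ≠ 0 := by rw [hJ]; exact mul_ne_zero (by norm_num) h0
  have hJt : volume J ≠ ∞ := by rw [hJ]; exact ENNReal.mul_ne_top (by norm_num) ENNReal.ofReal_ne_top
  calc c * ∫⁻ t in Metric.closedBall x (4 * ρ), u t
      ≤ ((∫⁻ t in I, f t) / volume I) * ∫⁻ t in J, u t := by
        rw [setLAverage_eq] at hc
        gcongr
    _ = ((∫⁻ t in I, f t) / volume I) * ((⨍⁻ t in J, u t ∂volume) * volume J) := by
        rw [setLAverage_eq, ENNReal.div_mul_cancel hJ0 hJt]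
    _ = ((∫⁻ t in I, f t) / volume I * volume I) * (5 * ⨍⁻ t in J, u t ∂volume) := by
        rw [hJ, hI]; ring
    _ = 5 * ((∫⁻ t in I, f t) * ⨍⁻ t in J, u t ∂volume) := by
        rw [ENNReal.div_mul_cancel (by rw [hI]; exact h0) (by rw [hI]; exact ENNReal.ofReal_ne_top)]; ring
    _ ≤ 5 * ∫⁻ t in I, f t * ⨍⁻ t in J, u t ∂volume := by
        gcongr
        exact lintegral_mul_const_le _ _
    _ ≤ 5 * ∫⁻ t in I, f t * maximal u t := by
        gcongr 5 * ?_
        refine setLIntegral_mono' measurableSet_Ioo fun t ht => ?_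
        gcongr
        exact laverage_le_maximal u (hIJ ht)

lemma mul_setLIntegral_biUnion_finset_le (f u : ℝ → ℝ≥0∞) (c : ℝ≥0∞) (S : Finset (ℝ × ℝ))
    (hS : ∀ i ∈ S, c < ⨍⁻ t in Ioo i.1 i.2, f t ∂volume) :
    c * ∫⁻ t in ⋃ i ∈ S, Ioo i.1 i.2, u t ≤ 5 * ∫⁻ t, f t * maximal u t := by
  let m : ℝ × ℝ → ℝ := fun i => (i.1 + i.2) / 2
  let ρ : ℝ × ℝ → ℝ := fun i => (i.2 - i.1) / 2
  have hIoo : ∀ i, Ioo i.1 i.2 = Ioo (m i - ρ i) (m i + ρ i) := fun i => by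
    congr 1 <;> simp only [m, ρ] <;> ring
  have hρ : ∀ i ∈ S, 0 < ρ i := fun i hi => by
    by_contra! h
    have := hS i hi
    rw [Ioo_eq_empty (by simp only [ρ] at h; linarith), setLAverage_eq] at this
    simp at this
  obtain ⟨R, hR⟩ := (S.image ρ).bddAbove
  obtain ⟨v, hvS, hdisj, hcover⟩ :=
    Vitali.exists_disjoint_subfamily_covering_enlargement_closedBall (S : Set (ℝ × ℝ)) m ρ R
      (fun i hi => hR (by simpa using ⟨_, _, hi, rfl⟩)) 4 (by norm_num)
  lift v to Finset (ℝ × ℝ) using S.finite_toSet.subset hvS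
  have hsub : ∀ i, Ioo i.1 i.2 ⊆ Metric.closedBall (m i) (ρ i) := fun i => by
    rw [hIoo, Real.closedBall_eq_Icc]; exact Ioo_subset_Icc_self
  have hunion : (⋃ i ∈ S, Ioo i.1 i.2) ⊆ ⋃ j ∈ v, Metric.closedBall (m j) (4 * ρ j) := by
    refine iUnion₂_subset fun i hi => ?_
    obtain ⟨j, hj, hij⟩ := hcover i hi
    exact ((hsub i).trans hij).trans
      (subset_biUnion_of_mem (u := fun j => Metric.closedBall (m j) (4 * ρ j)) hj)
  calc c * ∫⁻ t in ⋃ i ∈ S, Ioo i.1 i.2, u t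
      ≤ c * ∫⁻ t in ⋃ j ∈ v, Metric.closedBall (m j) (4 * ρ j), u t := by
        gcongr
    _ ≤ c * ∑ j ∈ v, ∫⁻ t in Metric.closedBall (m j) (4 * ρ j), u t := by
        gcongr
        rw [← withDensity_apply' u]
        refine (measure_biUnion_finset_le _ _).trans (Finset.sum_le_sum fun j _ => ?_)
        rw [withDensity_apply' u]
    _ = ∑ j ∈ v, c * ∫⁻ t in Metric.closedBall (m j) (4 * ρ j), u t := Finset.mul_sum _ _ _
    _ ≤ ∑ j ∈ v, 5 * ∫⁻ t in Ioo j.1 j.2, f t * maximal u t := by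
        refine Finset.sum_le_sum fun j hj => ?_
        have hlt := hS j (hvS hj)
        rw [hIoo] at hlt ⊢
        exact mul_setLIntegral_le_of_lt_laverage f u (hρ j (hvS hj)) hlt
    _ = 5 * ∫⁻ t in ⋃ j ∈ v, Ioo j.1 j.2, f t * maximal u t := by
        rw [← Finset.mul_sum, lintegral_biUnion_finset _ fun _ _ => measurableSet_Ioo]
        exact hdisj.mono fun i => hsub i
    _ ≤ 5 * ∫⁻ t, f t * maximal u t := by
        gcongr
        exact Measure.restrict_le_self

/-- The weighted weak type `(1,1)` inequality of Fefferman and Stein. -/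
lemma mul_setLIntegral_lt_maximal_le (f u : ℝ → ℝ≥0∞) (c : ℝ≥0∞) :
    c * ∫⁻ t in {x | c < maximal f x}, u t ≤ 5 * ∫⁻ t, f t * maximal u t := by
  rw [setOf_lt_maximal]
  obtain ⟨T, hTI, hTc, hT⟩ := TopologicalSpace.isOpen_biUnion_countable
    {i : ℝ × ℝ | c < ⨍⁻ t in Ioo i.1 i.2, f t ∂volume} (fun i => Ioo i.1 i.2) fun _ _ => isOpen_Ioo
  rw [← hT]
  have := hTc.to_subtype
  have hU : (⋃ i ∈ T, Ioo i.1 i.2) =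
      ⋃ S : Finset T, ⋃ i ∈ S, Ioo (i : ℝ × ℝ).1 (i : ℝ × ℝ).2 := by
    rw [biUnion_eq_iUnion, iUnion_eq_iUnion_finset]
  rw [hU, setLIntegral_iUnion_of_directed, ENNReal.mul_iSup]
  · refine iSup_le fun S => ?_
    refine le_trans (le_of_eq ?_) (mul_setLIntegral_biUnion_finset_le f u c
      (S.map (Function.Embedding.subtype _)) ?_)
    · congr 3
      ext x
      simp
    · intro i hi
      obtain ⟨j, -, rfl⟩ := Finset.mem_map.1 hi
      exact hTI j.2
  · exact directed_of_isDirected_le fun S S' h => biUnion_subset_biUnion_left h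

lemma lintegral_Ioi_ite_rpow {s : ℝ} (hs : 0 < s) (y : ℝ≥0∞) :
    ∫⁻ t in Ioi (0 : ℝ), (if ENNReal.ofReal t < y then ENNReal.ofReal (t ^ (s - 1)) else 0) =
      y ^ s / ENNReal.ofReal s := by
  have hfin : ∀ Y : ℝ, 0 ≤ Y → ∫⁻ t in Ioi (0 : ℝ),
      (if ENNReal.ofReal t < ENNReal.ofReal Y then ENNReal.ofReal (t ^ (s - 1)) else 0) =
      ENNReal.ofReal Y ^ s / ENNReal.ofReal s := by
    intro Y hY
    have hset : ∫⁻ t in Ioi (0 : ℝ),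
        (if ENNReal.ofReal t < ENNReal.ofReal Y then ENNReal.ofReal (t ^ (s - 1)) else 0) =
        ∫⁻ t in Ioo 0 Y, ENNReal.ofReal (t ^ (s - 1)) := by
      rw [← Ioi_inter_Iio, inter_comm, ← Measure.restrict_restrict measurableSet_Iio,
        ← lintegral_indicator measurableSet_Iio]
      refine setLIntegral_congr_fun measurableSet_Ioi fun t ht => ?_
      have : ENNReal.ofReal t < ENNReal.ofReal Y ↔ t < Y :=
        ENNReal.ofReal_lt_ofReal_iff_of_nonneg (le_of_lt ht)
      simp only [this, indicator_apply, mem_Iio]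
    have hint : IntegrableOn (fun t : ℝ => t ^ (s - 1)) (Ioc 0 Y) :=
      (intervalIntegrable_iff_integrableOn_Ioc_of_le hY).1
        (intervalIntegral.intervalIntegrable_rpow' (by linarith))
    rw [hset, restrict_Ioo_eq_restrict_Ioc, ← ofReal_integral_eq_lintegral_ofReal hint,
      ← intervalIntegral.integral_of_le hY, integral_rpow (Or.inl (by linarith)),
      sub_add_cancel, Real.zero_rpow hs.ne', sub_zero, ENNReal.ofReal_div_of_pos hs,
      ENNReal.ofReal_rpow_of_nonneg hY hs.le]
    exact (ae_restrict_iff' measurableSet_Ioc).2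
      (Filter.Eventually.of_forall fun t ht => Real.rpow_nonneg ht.1.le _)
  rcases eq_or_ne y ∞ with rfl | hy
  · rw [ENNReal.top_rpow_of_pos hs, ENNReal.top_div_of_ne_top ENNReal.ofReal_ne_top]
    by_contra hL
    set L := ∫⁻ t in Ioi (0 : ℝ),
      (if ENNReal.ofReal t < ∞ then ENNReal.ofReal (t ^ (s - 1)) else 0) with hLdef
    have hA : L * ENNReal.ofReal s ≠ ∞ := ENNReal.mul_ne_top hL ENNReal.ofReal_ne_top
    set B := (L * ENNReal.ofReal s + 1) ^ (1 / s) with hB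
    have hBt : B ≠ ∞ := ENNReal.rpow_ne_top_of_nonneg (by positivity)
      (ENNReal.add_ne_top.2 ⟨hA, ENNReal.one_ne_top⟩)
    have hle : B ^ s / ENNReal.ofReal s ≤ L := by
      rw [← ENNReal.ofReal_toReal hBt, ← hfin _ ENNReal.toReal_nonneg, hLdef]
      gcongr with t
      split_ifs <;> simp_all
    rw [hB, ← ENNReal.rpow_mul, one_div_mul_cancel hs.ne', ENNReal.rpow_one,
      ENNReal.div_le_iff (by simpa using hs) ENNReal.ofReal_ne_top] at hle
    exact (ENNReal.lt_add_right hA one_ne_zero).not_ge hle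
  · rw [← ENNReal.ofReal_toReal hy]
    exact hfin _ ENNReal.toReal_nonneg

lemma measurable_ite_rpow (s : ℝ) :
    Measurable fun z : ℝ × ℝ≥0∞ =>
      if ENNReal.ofReal z.1 < z.2 then ENNReal.ofReal (z.1 ^ (s - 1)) else 0 :=
  Measurable.ite (measurableSet_lt (by fun_prop) (by fun_prop)) (by fun_prop) measurable_const

lemma ofReal_mul_setLIntegral_lt_maximal_le (f u : ℝ → ℝ≥0∞) (t : ℝ) :
    ENNReal.ofReal t * ∫⁻ x in {x | ENNReal.ofReal t < maximal f x}, u x ≤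
      10 * ∫⁻ x, (if ENNReal.ofReal t < 2 * f x then f x else 0) * maximal u x := by
  set c := ENNReal.ofReal (t / 2) with hc
  have htc : ENNReal.ofReal t = 2 * c := by
    rw [hc, ← ENNReal.ofReal_ofNat, ← ENNReal.ofReal_mul (by norm_num)]
    congr 1; ring
  have hct : c ≠ ∞ := ENNReal.ofReal_ne_top
  set h : ℝ → ℝ≥0∞ := fun x => if ENNReal.ofReal t < 2 * f x then f x else 0 with hh
  have hfh : ∀ x, f x ≤ c + h x := fun x => by
    by_cases hx : ENNReal.ofReal t < 2 * f x
    · simp [hh, hx]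
    · simp only [hh, hx, if_false, add_zero]
      rw [htc, not_lt] at hx
      exact (ENNReal.mul_le_mul_iff_right (by norm_num) (by norm_num)).1 hx
  have hsub : {x | ENNReal.ofReal t < maximal f x} ⊆ {x | c < maximal h x} := by
    intro x hx
    have h1 : maximal f x ≤ c + maximal h x :=
      (maximal_mono_ae (Filter.Eventually.of_forall hfh) x).trans
        ((maximal_add_le measurable_const x).trans
          (add_le_add_left (maximal_const_le c x) _))
    have h2 : c + c < c + maximal h x := by
      rw [← two_mul, ← htc]
      exact lt_of_lt_of_le hx h1
    exact (ENNReal.add_lt_add_iff_left hct).1 h2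
  calc ENNReal.ofReal t * ∫⁻ x in {x | ENNReal.ofReal t < maximal f x}, u x
      ≤ 2 * c * ∫⁻ x in {x | c < maximal h x}, u x := by
        rw [htc] at hsub ⊢
        gcongr
    _ ≤ 2 * (5 * ∫⁻ x, h x * maximal u x) := by
        rw [mul_assoc]
        gcongr 2 * ?_
        exact mul_setLIntegral_lt_maximal_le h u c
    _ = 10 * ∫⁻ x, h x * maximal u x := by rw [← mul_assoc]; norm_num

/-- The weighted strong type inequality of Fefferman and Stein. -/
theorem lintegral_maximal_rpow_mul_le {r : ℝ} (hr : 1 < r) :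
    ∃ C : ℝ≥0∞, C ≠ ∞ ∧ ∀ f u : ℝ → ℝ≥0∞, Measurable f → Measurable u →
      ∫⁻ x, maximal f x ^ r * u x ≤ C * ∫⁻ x, f x ^ r * maximal u x := by
  have hr0 : 0 < r := by linarith
  have hr1 : 0 < r - 1 := by linarith
  refine ⟨ENNReal.ofReal r * (10 * (2 ^ (r - 1) / ENNReal.ofReal (r - 1))), ?_, ?_⟩
  · refine ENNReal.mul_ne_top ENNReal.ofReal_ne_top (ENNReal.mul_ne_top (by norm_num) ?_)
    exact ENNReal.div_ne_top (ENNReal.rpow_ne_top_of_nonneg hr1.le (by norm_num))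
      (by simpa using hr)
  intro f u hf hu
  have hM := measurable_maximal f
  have hMu := measurable_maximal u
  set K : ℝ → ℝ → ℝ≥0∞ → ℝ≥0∞ := fun s t y =>
    if ENNReal.ofReal t < y then ENNReal.ofReal (t ^ (s - 1)) else 0 with hK
  have hKm : ∀ s, Measurable fun z : ℝ × ℝ≥0∞ => K s z.1 z.2 := measurable_ite_rpow
  have hKm' : ∀ s y, Measurable fun t => K s t y := fun s y =>
    (hKm s).comp (measurable_id.prodMk measurable_const)
  have hKint : ∀ s, 0 < s → ∀ y, ∫⁻ t in Ioi (0 : ℝ), K s t y = y ^ s / ENNReal.ofReal s :=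
    fun s hs y => lintegral_Ioi_ite_rpow hs y
  have hlevel : ∀ t ∈ Ioi (0 : ℝ), ∫⁻ x, K r t (maximal f x) * u x ≤
      10 * ∫⁻ x, f x * maximal u x * K (r - 1) t (2 * f x) := by
    intro t ht
    have ht0 : (0 : ℝ) < t := ht
    have hpow : ENNReal.ofReal (t ^ (r - 1)) =
        ENNReal.ofReal (t ^ (r - 1 - 1)) * ENNReal.ofReal t := by
      rw [← ENNReal.ofReal_mul (by positivity), ← Real.rpow_add_one ht0.ne', sub_add_cancel]
    calc ∫⁻ x, K r t (maximal f x) * u x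
        = ENNReal.ofReal (t ^ (r - 1)) *
            ∫⁻ x in {x | ENNReal.ofReal t < maximal f x}, u x := by
          rw [← lintegral_indicator (measurableSet_lt measurable_const hM), ← lintegral_const_mul']
          · refine lintegral_congr fun x => ?_
            by_cases hx : ENNReal.ofReal t < maximal f x <;> simp [hK, hx, indicator]
          · exact ENNReal.ofReal_ne_top
      _ ≤ ENNReal.ofReal (t ^ (r - 1 - 1)) *
            (10 * ∫⁻ x, (if ENNReal.ofReal t < 2 * f x then f x else 0) * maximal u x) := by
          rw [hpow, mul_assoc]
          gcongr _ * ?_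
          exact ofReal_mul_setLIntegral_lt_maximal_le f u t
      _ = 10 * ∫⁻ x, f x * maximal u x * K (r - 1) t (2 * f x) := by
          rw [mul_left_comm, ← lintegral_const_mul' _ _ ENNReal.ofReal_ne_top]
          congr 1
          refine lintegral_congr fun x => ?_
          by_cases hx : ENNReal.ofReal t < 2 * f x
          · simp only [hK, hx, if_true]; ring
          · simp [hK, hx]
  calc ∫⁻ x, maximal f x ^ r * u x
      = ENNReal.ofReal r * ∫⁻ x, ∫⁻ t in Ioi (0 : ℝ), K r t (maximal f x) * u x := by
        rw [← lintegral_const_mul' _ _ ENNReal.ofReal_ne_top]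
        refine lintegral_congr fun x => ?_
        rw [lintegral_mul_const _ (hKm' r _),
          hKint r hr0, ← mul_assoc, ENNReal.mul_div_cancel (by simpa using hr0)
          ENNReal.ofReal_ne_top]
    _ = ENNReal.ofReal r * ∫⁻ t in Ioi (0 : ℝ), ∫⁻ x, K r t (maximal f x) * u x := by
        rw [lintegral_lintegral_swap]
        refine Measurable.aemeasurable ?_
        exact ((hKm r).comp (measurable_snd.prodMk (hM.comp measurable_fst))).mul
          (hu.comp measurable_fst)
    _ ≤ ENNReal.ofReal r * ∫⁻ t in Ioi (0 : ℝ),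
          10 * ∫⁻ x, f x * maximal u x * K (r - 1) t (2 * f x) := by
        gcongr ENNReal.ofReal r * ?_
        exact setLIntegral_mono' measurableSet_Ioi hlevel
    _ = ENNReal.ofReal r * (10 * ∫⁻ x, ∫⁻ t in Ioi (0 : ℝ),
          f x * maximal u x * K (r - 1) t (2 * f x)) := by
        rw [lintegral_const_mul' _ _ (by norm_num), lintegral_lintegral_swap]
        refine Measurable.aemeasurable ?_
        exact ((hf.mul hMu).comp measurable_snd).mul
          ((hKm (r - 1)).comp (measurable_fst.prodMk ((hf.const_mul 2).comp measurable_snd)))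
    _ = ENNReal.ofReal r * (10 * ∫⁻ x, 2 ^ (r - 1) / ENNReal.ofReal (r - 1) *
          (f x ^ r * maximal u x)) := by
        congr 2
        refine lintegral_congr fun x => ?_
        rw [lintegral_const_mul _ (hKm' (r - 1) _),
          hKint (r - 1) hr1, ENNReal.mul_rpow_of_nonneg _ _ hr1.le]
        have : f x ^ r = f x * f x ^ (r - 1) := by
          nth_rw 2 [← ENNReal.rpow_one (f x)]
          rw [← ENNReal.rpow_add_of_nonneg _ _ zero_le_one hr1.le, add_sub_cancel]
        rw [this, ENNReal.div_eq_inv_mul, ENNReal.div_eq_inv_mul]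
        ring
    _ = _ := by
        rw [lintegral_const_mul _ (by fun_prop)]
        ring

/-- The Hardy–Littlewood maximal inequality. -/
theorem lintegral_maximal_rpow_le {r : ℝ} (hr : 1 < r) :
    ∃ C : ℝ≥0∞, C ≠ ∞ ∧ ∀ f : ℝ → ℝ≥0∞, Measurable f →
      ∫⁻ x, maximal f x ^ r ≤ C * ∫⁻ x, f x ^ r := by
  obtain ⟨C, hC, h⟩ := lintegral_maximal_rpow_mul_le hr
  refine ⟨C, hC, fun f hf => ?_⟩
  have := h f (fun _ => 1) hf measurable_const
  simp only [mul_one] at this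
  refine this.trans ?_
  gcongr with x
  exact mul_le_of_le_one_right' (maximal_const_le 1 x)

lemma lintegral_tsum_mul {f : ℕ → ℝ → ℝ≥0∞} (hf : ∀ k, Measurable (f k)) {u : ℝ → ℝ≥0∞}
    (hu : Measurable u) :
    ∫⁻ x, (∑' k, f k x) * u x = ∑' k, ∫⁻ x, f k x * u x := by
  simp only [← ENNReal.tsum_mul_right]
  exact lintegral_tsum fun k => ((hf k).mul hu).aemeasurable

/-- The diagonal case of the Fefferman–Stein inequality. -/
lemma lintegral_tsum_maximal_rpow_le {r : ℝ} (hr : 1 < r) :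
    ∃ C : ℝ≥0∞, C ≠ ∞ ∧ ∀ f : ℕ → ℝ → ℝ≥0∞, (∀ k, Measurable (f k)) →
      ∫⁻ x, ∑' k, maximal (f k) x ^ r ≤ C * ∫⁻ x, ∑' k, f k x ^ r := by
  obtain ⟨C, hC, h⟩ := lintegral_maximal_rpow_le hr
  refine ⟨C, hC, fun f hf => ?_⟩
  rw [lintegral_tsum fun k => ((measurable_maximal (f k)).pow_const r).aemeasurable,
    lintegral_tsum fun k => ((hf k).pow_const r).aemeasurable, ← ENNReal.tsum_mul_left]
  exact ENNReal.tsum_le_tsum fun k => h (f k) (hf k)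

lemma le_rpow_of_le_mul_rpow {θ θ' : ℝ} (hθ : θ.HolderConjugate θ') {X K : ℝ≥0∞} (hX : X ≠ ∞)
    (h : X ≤ K * X ^ (1 / θ')) : X ≤ K ^ θ := by
  rcases eq_or_ne X 0 with rfl | hX0
  · exact zero_le
  have hθ0 := hθ.pos
  have hθ0' := hθ.symm.pos
  have hsplit : X = X ^ (1 / θ) * X ^ (1 / θ') := by
    rw [← ENNReal.rpow_add _ _ hX0 hX, one_div, one_div, hθ.inv_add_inv_eq_one, ENNReal.rpow_one]
  have hne0 : X ^ (1 / θ') ≠ 0 := by simp [ENNReal.rpow_eq_zero_iff, hX0, hX]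
  have hnet : X ^ (1 / θ') ≠ ∞ := ENNReal.rpow_ne_top_of_nonneg (by positivity) hX
  nth_rw 1 [hsplit] at h
  rw [ENNReal.mul_le_mul_iff_left hne0 hnet] at h
  calc X = (X ^ (1 / θ)) ^ θ := by
        rw [← ENNReal.rpow_mul, one_div_mul_cancel hθ0.ne', ENNReal.rpow_one]
    _ ≤ K ^ θ := by gcongr

/-- A lower Lebesgue integral is bounded by any bound for the integrable simple functions below
the integrand. -/
lemma lintegral_le_of_forall_simpleFunc {f : ℝ → ℝ≥0∞} {K : ℝ≥0∞}
    (h : ∀ φ : SimpleFunc ℝ ℝ≥0, (∀ x, (φ x : ℝ≥0∞) ≤ f x) → ∫⁻ x, (φ x : ℝ≥0∞) ≠ ∞ →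
      ∫⁻ x, (φ x : ℝ≥0∞) ≤ K) : ∫⁻ x, f x ≤ K := by
  rw [lintegral_eq_nnreal]
  refine iSup₂_le fun φ hφ => ?_
  rw [← SimpleFunc.lintegral_eq_lintegral]
  simp only [SimpleFunc.map_apply]
  refine le_of_forall_lt fun L hL => ?_
  obtain ⟨ψ, hψφ, hψ, hLψ⟩ := SimpleFunc.exists_lt_lintegral_simpleFunc_of_lt_lintegral hL
  exact hLψ.trans_le (h ψ (fun x => (ENNReal.coe_le_coe.2 (hψφ x)).trans (hφ x)) hψ.ne)

lemma fefferman_stein_of_one_lt {r θ : ℝ} (hr : 1 < r) (hθ : 1 < θ) :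
    ∃ C : ℝ≥0∞, C ≠ ∞ ∧ ∀ f : ℕ → ℝ → ℝ≥0∞, (∀ k, Measurable (f k)) →
      ∫⁻ x, (∑' k, maximal (f k) x ^ r) ^ θ ≤ C * ∫⁻ x, (∑' k, f k x ^ r) ^ θ := by
  have hconj := Real.HolderConjugate.conjExponent hθ
  set θ' := θ.conjExponent
  have hθ0 : 0 < θ := hconj.pos
  have hθ0' : 0 < θ' := hconj.symm.pos
  obtain ⟨C₁, hC₁, h₁⟩ := lintegral_maximal_rpow_mul_le hr
  obtain ⟨C₂, hC₂, h₂⟩ := lintegral_maximal_rpow_le hconj.symm.lt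
  refine ⟨(C₁ * C₂ ^ (1 / θ')) ^ θ, ?_, fun f hf => ?_⟩
  · exact ENNReal.rpow_ne_top_of_nonneg hθ0.le
      (ENNReal.mul_ne_top hC₁ (ENNReal.rpow_ne_top_of_nonneg (by positivity) hC₂))
  set A := ∫⁻ x, (∑' k, f k x ^ r) ^ θ
  refine lintegral_le_of_forall_simpleFunc fun φ hφ hφt => ?_
  set u : ℝ → ℝ≥0∞ := fun x => (φ x : ℝ≥0∞) ^ (1 / θ') with hu_def
  have hφm : Measurable fun x => (φ x : ℝ≥0∞) := φ.measurable.coe_nnreal_ennreal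
  have hu : Measurable u := hφm.pow_const _
  have hMu := measurable_maximal u
  have hE : Measurable fun x => ∑' k, f k x ^ r :=
    Measurable.tsum fun k => (hf k).pow_const r
  have hbound : ∫⁻ x, (φ x : ℝ≥0∞) ≤
      (C₁ * C₂ ^ (1 / θ') * A ^ (1 / θ)) * (∫⁻ x, (φ x : ℝ≥0∞)) ^ (1 / θ') := by
    calc ∫⁻ x, (φ x : ℝ≥0∞)
        ≤ ∫⁻ x, (∑' k, maximal (f k) x ^ r) * u x := by
          refine lintegral_mono fun x => ?_
          have hsplit : (φ x : ℝ≥0∞) = (φ x : ℝ≥0∞) ^ (1 / θ) * u x := by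
            rw [hu_def, ← ENNReal.rpow_add_of_nonneg _ _ (by positivity) (by positivity),
              one_div, one_div, hconj.inv_add_inv_eq_one, ENNReal.rpow_one]
          have hle : (φ x : ℝ≥0∞) ^ (1 / θ) ≤ ∑' k, maximal (f k) x ^ r := by
            rw [one_div]
            exact (ENNReal.rpow_inv_le_iff hθ0).2 (hφ x)
          dsimp only
          rw [hsplit]
          gcongr
      _ = ∑' k, ∫⁻ x, maximal (f k) x ^ r * u x :=
          lintegral_tsum_mul (fun k => (measurable_maximal (f k)).pow_const r) hu
      _ ≤ ∑' k, C₁ * ∫⁻ x, f k x ^ r * maximal u x :=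
          ENNReal.tsum_le_tsum fun k => h₁ (f k) u (hf k) hu
      _ = C₁ * ∫⁻ x, (∑' k, f k x ^ r) * maximal u x := by
          rw [ENNReal.tsum_mul_left, lintegral_tsum_mul (fun k => (hf k).pow_const r) hMu]
      _ ≤ C₁ * (A ^ (1 / θ) * (∫⁻ x, maximal u x ^ θ') ^ (1 / θ')) := by
          gcongr C₁ * ?_
          exact ENNReal.lintegral_mul_le_Lp_mul_Lq _ hconj hE.aemeasurable hMu.aemeasurable
      _ ≤ C₁ * (A ^ (1 / θ) * (C₂ * ∫⁻ x, u x ^ θ') ^ (1 / θ')) := by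
          gcongr
          exact h₂ u hu
      _ = _ := by
          have hφu : ∀ x, u x ^ θ' = (φ x : ℝ≥0∞) := fun x => by
            rw [hu_def, ← ENNReal.rpow_mul, one_div_mul_cancel hθ0'.ne', ENNReal.rpow_one]
          simp only [hφu]
          rw [ENNReal.mul_rpow_of_nonneg _ _ (by positivity)]
          ring
  refine (le_rpow_of_le_mul_rpow hconj hφt hbound).trans (le_of_eq ?_)
  rw [ENNReal.mul_rpow_of_nonneg _ _ hθ0.le, ← ENNReal.rpow_mul A, one_div_mul_cancel hθ0.ne',
    ENNReal.rpow_one]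

lemma fefferman_stein_of_lt_one {r θ : ℝ} (hr : 1 < r) (hθ0 : 0 < θ) (hθ1 : θ < 1)
    (hrθ : 1 < r * θ) :
    ∃ C : ℝ≥0∞, C ≠ ∞ ∧ ∀ f : ℕ → ℝ → ℝ≥0∞, (∀ k, Measurable (f k)) →
      ∫⁻ x, (∑' k, maximal (f k) x ^ r) ^ θ ≤ C * ∫⁻ x, (∑' k, f k x ^ r) ^ θ := by
  have hr0 : 0 < r := by linarith
  have hr1 : 0 < r - 1 := by linarith
  have hθ' : 0 < 1 - θ := by linarith
  have hgap : r / (r - 1) < r * θ / (1 - θ) := by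
    rw [div_lt_div_iff₀ hr1 hθ']
    nlinarith
  obtain ⟨b, hrb, hbκ⟩ := exists_between hgap
  set κ := r * θ / (1 - θ) with hκ
  have hb1 : 1 < b := lt_trans ((one_lt_div hr1).2 (by linarith)) hrb
  have hb0 : 0 < b := by linarith
  have hκ0 : 0 < κ := by linarith
  have hab := (Real.HolderConjugate.conjExponent hb1).symm
  set a := b.conjExponent with ha
  have ha0 : 0 < a := hab.pos
  have har : a < r := by
    rw [ha, Real.conjExponent, div_lt_iff₀ (by linarith)]
    rw [div_lt_iff₀ hr1] at hrb
    linarith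
  obtain ⟨C₁, hC₁, h₁⟩ := lintegral_tsum_maximal_rpow_le ((one_lt_div ha0).2 har)
  obtain ⟨C₂, hC₂, h₂⟩ := lintegral_maximal_rpow_le ((one_lt_div hb0).2 hbκ)
  have hHol : (1 / θ).HolderConjugate (1 / (1 - θ)) := by
    rw [Real.holderConjugate_iff]
    exact ⟨(one_lt_div hθ0).2 hθ1, by simp⟩
  refine ⟨C₁ ^ θ * C₂ ^ (1 - θ) + 1, ?_, fun f hf => ?_⟩
  · exact ENNReal.add_ne_top.2 ⟨ENNReal.mul_ne_top (ENNReal.rpow_ne_top_of_nonneg hθ0.le hC₁)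
      (ENNReal.rpow_ne_top_of_nonneg hθ'.le hC₂), ENNReal.one_ne_top⟩
  set E : ℝ → ℝ≥0∞ := fun x => ∑' k, f k x ^ r with hE_def
  have hE : Measurable E := Measurable.tsum fun k => (hf k).pow_const r
  rcases eq_or_ne (∫⁻ x, E x ^ θ) ∞ with hA | hA
  · rw [hA, ENNReal.mul_top (by simp)]
    exact le_top
  have hEt : ∀ᵐ x, E x ≠ ∞ := by
    filter_upwards [ae_lt_top (hE.pow_const θ) hA] with x hx hxt
    rw [hxt, ENNReal.top_rpow_of_pos hθ0] at hx
    exact lt_irrefl _ hx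
  set v : ℝ → ℝ≥0∞ := fun x => E x ^ ((1 - θ) / r) with hv_def
  have hv : Measurable v := hE.pow_const _
  set g : ℕ → ℝ → ℝ≥0∞ := fun k x => f k x * (v x)⁻¹ with hg_def
  have hg : ∀ k, Measurable (g k) := fun k => (hf k).mul hv.inv
  have hga : ∀ k, Measurable fun x => g k x ^ a := fun k => (hg k).pow_const a
  have hvt : ∀ x, E x ≠ ∞ → v x ≠ ∞ := fun x hx =>
    ENNReal.rpow_ne_top_of_nonneg (by positivity) hx
  have hf0 : ∀ k x, E x = 0 → f k x = 0 := fun k x hx => by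
    have := ENNReal.tsum_eq_zero.1 hx k
    exact (ENNReal.rpow_eq_zero_iff_of_pos hr0).1 this
  have hfg : ∀ k, f k ≤ᵐ[volume] fun x => g k x * v x := fun k => by
    filter_upwards [hEt] with x hx
    rcases eq_or_ne (E x) 0 with h0 | h0
    · rw [hf0 k x h0]; exact zero_le
    · have hv0 : v x ≠ 0 := by
        simp only [hv_def, ne_eq, ENNReal.rpow_eq_zero_iff, h0, hx]
        simp
      rw [hg_def]
      dsimp only
      rw [mul_assoc, ENNReal.inv_mul_cancel hv0 (hvt x hx), mul_one]
  have hM : ∀ k x, maximal (f k) x ^ r ≤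
      maximal (fun t => g k t ^ a) x ^ (r / a) * maximal (fun t => v t ^ b) x ^ (r / b) := by
    intro k x
    refine (ENNReal.rpow_le_rpow ((maximal_mono_ae (hfg k) x).trans
      (maximal_mul_le hab (hg k) hv x)) hr0.le).trans (le_of_eq ?_)
    rw [ENNReal.mul_rpow_of_nonneg _ _ hr0.le, ← ENNReal.rpow_mul, ← ENNReal.rpow_mul,
      one_div_mul_eq_div, one_div_mul_eq_div]
  set N : ℝ → ℝ≥0∞ := fun x => ∑' k, maximal (fun t => g k t ^ a) x ^ (r / a) with hN_def
  have hN : Measurable N := Measurable.tsum fun k => (measurable_maximal _).pow_const _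
  set W : ℝ → ℝ≥0∞ := maximal fun t => v t ^ b with hW_def
  have hW : Measurable W := measurable_maximal _
  have hNint : ∫⁻ x, N x ≤ C₁ * ∫⁻ x, E x ^ θ := by
    refine (h₁ (fun k t => g k t ^ a) hga).trans ?_
    gcongr C₁ * ?_
    refine lintegral_mono_ae ?_
    filter_upwards [hEt] with x hx
    have hgr : ∀ k, (g k x ^ a) ^ (r / a) = f k x ^ r * (v x)⁻¹ ^ r := fun k => by
      rw [← ENNReal.rpow_mul, mul_div_cancel₀ _ ha0.ne', ENNReal.mul_rpow_of_nonneg _ _ hr0.le]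
    simp only [hgr]
    rw [ENNReal.tsum_mul_right]
    rcases eq_or_ne (E x) 0 with h0 | h0
    · change E x * _ ≤ _
      rw [h0, zero_mul]; exact zero_le
    · change E x * _ ≤ _
      refine le_of_eq ?_
      nth_rw 1 [← ENNReal.rpow_one (E x)]
      rw [hv_def, ENNReal.inv_rpow, ← ENNReal.rpow_mul, div_mul_cancel₀ _ hr0.ne',
        ← ENNReal.rpow_neg, ← ENNReal.rpow_add _ _ h0 hx]
      congr 1; ring
  have hWint : ∫⁻ x, W x ^ (κ / b) ≤ C₂ * ∫⁻ x, E x ^ θ := by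
    refine (h₂ _ (hv.pow_const b)).trans (le_of_eq ?_)
    congr 1
    refine lintegral_congr fun x => ?_
    rw [hv_def, ← ENNReal.rpow_mul, ← ENNReal.rpow_mul]
    congr 1
    rw [hκ]
    field_simp
  calc ∫⁻ x, (∑' k, maximal (f k) x ^ r) ^ θ
      ≤ ∫⁻ x, N x ^ θ * W x ^ (r / b * θ) := by
        refine lintegral_mono fun x => ?_
        dsimp only
        rw [ENNReal.rpow_mul, ← ENNReal.mul_rpow_of_nonneg _ _ hθ0.le, hN_def,
          ← ENNReal.tsum_mul_right]
        gcongr with k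
        exact hM k x
    _ ≤ (∫⁻ x, (N x ^ θ) ^ (1 / θ)) ^ (1 / (1 / θ)) *
          (∫⁻ x, (W x ^ (r / b * θ)) ^ (1 / (1 - θ))) ^ (1 / (1 / (1 - θ))) :=
        ENNReal.lintegral_mul_le_Lp_mul_Lq _ hHol (hN.pow_const _).aemeasurable
          (hW.pow_const _).aemeasurable
    _ = (∫⁻ x, N x) ^ θ * (∫⁻ x, W x ^ (κ / b)) ^ (1 - θ) := by
        have hexp : r / b * θ * (1 / (1 - θ)) = κ / b := by rw [hκ]; field_simp
        simp only [← ENNReal.rpow_mul, mul_one_div_cancel hθ0.ne', ENNReal.rpow_one, one_div_one_div,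
          hexp]
    _ ≤ (C₁ * ∫⁻ x, E x ^ θ) ^ θ * (C₂ * ∫⁻ x, E x ^ θ) ^ (1 - θ) := by gcongr
    _ = C₁ ^ θ * C₂ ^ (1 - θ) * ∫⁻ x, E x ^ θ := by
        rw [ENNReal.mul_rpow_of_nonneg _ _ hθ0.le, ENNReal.mul_rpow_of_nonneg _ _ hθ'.le,
          mul_mul_mul_comm, ← ENNReal.rpow_add_of_nonneg _ _ hθ0.le hθ'.le, add_sub_cancel,
          ENNReal.rpow_one]
    _ ≤ _ := by
        gcongr
        exact le_self_add

/-- The Fefferman–Stein vector-valued maximal inequality on the line. -/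
theorem fefferman_stein {r θ : ℝ} (hr : 1 < r) (hrθ : 1 < r * θ) :
    ∃ C : ℝ≥0∞, C ≠ ∞ ∧ ∀ f : ℕ → ℝ → ℝ≥0∞, (∀ k, Measurable (f k)) →
      ∫⁻ x, (∑' k, maximal (f k) x ^ r) ^ θ ≤ C * ∫⁻ x, (∑' k, f k x ^ r) ^ θ := by
  rcases lt_trichotomy θ 1 with hθ | rfl | hθ
  · exact fefferman_stein_of_lt_one hr (by by_contra! h; nlinarith) hθ hrθ
  · simpa only [ENNReal.rpow_one] using lintegral_tsum_maximal_rpow_le hr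
  · exact fefferman_stein_of_one_lt hr hθ

lemma ofReal_MMq_le {q : ℝ} (hq : 0 < q) {g : ℝ → ℝ} (hg : Measurable g) (x : ℝ) :
    ENNReal.ofReal (MMq q g x) ≤
      maximal ((Ioo 0 1).indicator fun t => ENNReal.ofReal |g t| ^ q) x ^ (1 / q) := by
  set h : ℝ → ℝ≥0∞ := (Ioo 0 1).indicator fun t => ENNReal.ofReal |g t| ^ q with hh
  rcases eq_or_ne (maximal h x) ∞ with htop | htop
  · rw [htop, ENNReal.top_rpow_of_pos (by positivity)]
    exact le_top
  refine ENNReal.ofReal_le_of_le_toReal (Real.sSup_le ?_ ENNReal.toReal_nonneg)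
  rintro y ⟨a, b, ha, hax, hxb, hb, rfl⟩
  rw [← ENNReal.toReal_rpow]
  have hab : 0 < b - a := by linarith
  have hval : (b - a)⁻¹ * ∫ t in Ioo a b, |g t| ^ q = (⨍⁻ t in Ioo a b, h t ∂volume).toReal := by
    have hint : ∫⁻ t in Ioo a b, h t = ∫⁻ t in Ioo a b, ENNReal.ofReal (|g t| ^ q) := by
      refine setLIntegral_congr_fun measurableSet_Ioo fun t ht => ?_
      rw [hh, indicator_of_mem (Ioo_subset_Ioo ha hb ht),
        ENNReal.ofReal_rpow_of_nonneg (abs_nonneg _) hq.le]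
    rw [setLAverage_eq, ENNReal.toReal_div, Real.volume_Ioo, ENNReal.toReal_ofReal hab.le, hint,
      integral_eq_lintegral_of_nonneg_ae (Filter.Eventually.of_forall fun t => by positivity)
        (hg.abs.pow_const q).aestronglyMeasurable, div_eq_inv_mul]
  rw [hval]
  gcongr
  exact laverage_le_maximal h ⟨hax, hxb⟩

/-- Fefferman–Stein vector-valued maximal inequality on `[0,1)`. -/
theorem stmt11 (p q : ℝ) (hp : 1 < p) (hq1 : 1 ≤ q) (hq2 : q < 2) (hqp : q < p) :
    ∃ C : ℝ, 0 < C ∧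
      ∀ g : ℕ → ℝ → ℝ, (∀ k, Measurable (g k)) →
        (∫⁻ x in Set.Ioo (0:ℝ) 1,
            (∑' k : ℕ, (ENNReal.ofReal (MMq q (g k) x)) ^ 2) ^ (p / 2)) ^ (1 / p) ≤
          ENNReal.ofReal C *
            (∫⁻ x in Set.Ioo (0:ℝ) 1,
              (∑' k : ℕ, (ENNReal.ofReal |g k x|) ^ 2) ^ (p / 2)) ^ (1 / p) := by
  have hq0 : 0 < q := by linarith
  have hp0 : 0 < p := by linarith
  have hrθ : 1 < 2 / q * (p / 2) := by
    rw [div_mul_div_cancel₀' two_ne_zero]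
    exact (one_lt_div hq0).2 hqp
  obtain ⟨C, hC, h⟩ := fefferman_stein ((one_lt_div hq0).2 hq2) hrθ
  have hCp : C ^ (1 / p) ≠ ∞ := ENNReal.rpow_ne_top_of_nonneg (by positivity) hC
  refine ⟨(C ^ (1 / p)).toReal + 1, by positivity, fun g hg => ?_⟩
  set f : ℕ → ℝ → ℝ≥0∞ := fun k =>
    (Ioo 0 1).indicator fun t => ENNReal.ofReal |g k t| ^ q with hf_def
  have hf : ∀ k, Measurable (f k) := fun k =>
    Measurable.indicator (by have := hg k; fun_prop) measurableSet_Ioo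
  have hleft : ∫⁻ x in Ioo (0 : ℝ) 1, (∑' k, ENNReal.ofReal (MMq q (g k) x) ^ 2) ^ (p / 2) ≤
      ∫⁻ x, (∑' k, maximal (f k) x ^ (2 / q)) ^ (p / 2) := by
    refine (lintegral_mono fun x => ?_).trans (setLIntegral_le_lintegral _ _)
    dsimp only
    gcongr with k
    refine (pow_le_pow_left' (ofReal_MMq_le hq0 (hg k) x) 2).trans (le_of_eq ?_)
    rw [← ENNReal.rpow_natCast, ← ENNReal.rpow_mul, Nat.cast_ofNat, one_div_mul_eq_div]
  have hright : ∫⁻ x, (∑' k, f k x ^ (2 / q)) ^ (p / 2) =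
      ∫⁻ x in Ioo (0 : ℝ) 1, (∑' k, ENNReal.ofReal |g k x| ^ 2) ^ (p / 2) := by
    rw [← lintegral_indicator measurableSet_Ioo]
    refine lintegral_congr fun x => ?_
    by_cases hx : x ∈ Ioo (0 : ℝ) 1
    · simp only [hf_def, indicator_of_mem hx, ← ENNReal.rpow_mul, mul_div_cancel₀ _ hq0.ne',
        ENNReal.rpow_ofNat]
    · simp only [hf_def, indicator_of_notMem hx, ENNReal.zero_rpow_of_pos (div_pos two_pos hq0),
        tsum_zero, ENNReal.zero_rpow_of_pos (half_pos hp0)]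
  calc _ ≤ (C * ∫⁻ x in Ioo (0 : ℝ) 1,
          (∑' k, ENNReal.ofReal |g k x| ^ 2) ^ (p / 2)) ^ (1 / p) := by
        gcongr
        exact hleft.trans (hright ▸ h f hf)
    _ = C ^ (1 / p) * (∫⁻ x in Ioo (0 : ℝ) 1,
          (∑' k, ENNReal.ofReal |g k x| ^ 2) ^ (p / 2)) ^ (1 / p) :=
        ENNReal.mul_rpow_of_nonneg _ _ (by positivity)
    _ ≤ _ := by
        gcongr
        rw [ENNReal.le_ofReal_iff_toReal_le hCp (by positivity)]
        exact le_add_of_nonneg_right zero_le_one
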